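/- For every well-formed formula Q and all well-formed formulas A, B of the implicational propositional calculus, the formula QQA ⊃ [QB ⊃ Q(A ⊃ B)] is a theorem of IPC. -/

import Mathlib

/-- Well-formed formulas of the implicational propositional calculus:
propositional variables (indexed by ℕ, so the set of wfs is countable)
and the single connective ⊃. -/
inductive Wf where
  | var : ℕ → Wf
  | imp : Wf → Wf → Wf
deriving DecidableEq

infixr:60 " ⊃' " => Wf.imp

/-- `Deduces Γ A` : `A` is deducible from the set `Γ` of extra axioms/hypotheses,
using the three axiom schemes of IPC (including the Peirce scheme) and modus ponens.
Theorems of IPC are `Deduces ∅ A`; for an extension `M` of IPC with extra-axiom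
set `E`, `T(M)` is `Deduces E`, and deducibility from hypotheses `Γ` in `M` is
`Deduces (E ∪ Γ)`. -/
inductive Deduces : Set Wf → Wf → Prop where
  | hyp : ∀ {Γ : Set Wf} {A : Wf}, A ∈ Γ → Deduces Γ A
  | ax1 : ∀ {Γ : Set Wf} (A B : Wf), Deduces Γ (A ⊃' (B ⊃' A))
  | ax2 : ∀ {Γ : Set Wf} (A B C : Wf),
      Deduces Γ ((A ⊃' (B ⊃' C)) ⊃' ((A ⊃' B) ⊃' (A ⊃' C)))
  | peirce : ∀ {Γ : Set Wf} (A B : Wf), Deduces Γ (((A ⊃' B) ⊃' A) ⊃' A)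
  | mp : ∀ {Γ : Set Wf} {A B : Wf}, Deduces Γ (A ⊃' B) → Deduces Γ A → Deduces Γ B

/-- Deduction theorem. -/
theorem Deduces.deduction {Γ Δ : Set Wf} {A B : Wf} (h : Deduces Δ B)
    (hΔ : Δ ⊆ insert A Γ) : Deduces Γ (A ⊃' B) := by
  induction h with
  | hyp hm =>
    rcases hΔ hm with h | h
    · rw [h]; exact .mp (.mp (.ax2 _ (A ⊃' A) _) (.ax1 _ _)) (.ax1 _ _)
    · exact .mp (.ax1 _ _) (.hyp h)
  | ax1 => exact .mp (.ax1 _ _) (.ax1 _ _)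
  | ax2 => exact .mp (.ax1 _ _) (.ax2 _ _ _)
  | peirce => exact .mp (.ax1 _ _) (.peirce _ _)
  | mp _ _ ih1 ih2 => exact .mp (.mp (.ax2 _ _ _) ih1) ih2

/-- Theorem 1(6): QQA ⊃ [QB ⊃ Q(A ⊃ B)] is a theorem of IPC. -/
theorem stmt_5 (Q A B : Wf) :
    Deduces ∅ (((A ⊃' Q) ⊃' Q) ⊃' ((B ⊃' Q) ⊃' ((A ⊃' B) ⊃' Q))) := by
  refine Deduces.deduction (Deduces.deduction (Deduces.deduction ?_ subset_rfl) subset_rfl)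
    subset_rfl
  refine .mp (A := A ⊃' Q) (.hyp (by simp)) ?_
  refine Deduces.deduction ?_ subset_rfl
  refine .mp (A := B) (.hyp (by simp)) ?_
  exact .mp (A := A) (.hyp (by simp)) (.hyp (by simp))
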